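/- arXiv:2603.09057 — 2 statements merged into one kernel-verified Lean document; each statement's English description precedes it below -/
import Mathlib

section
/- A quiver datum (V, p) is extremizable if and only if there exist invertible matrices g_i ∈ GL(d_i, ℝ) for i ∈ [k] and h_j ∈ GL(n_j, ℝ) for j ∈ [m] such that (W, p) is a geometric datum, where W_a := h_j V_a g_i^{-1} for all a ∈ 𝒜_{ij}, i ∈ [k], j ∈ [m]. -/
open Matrix BigOperators

/-- The value of the capacity functional of a quiver datum `(V, p)` at a tuple `Y`
of `n j × n j` matrices. -/
noncomputable def capVal {k m : ℕ} {d : Fin k → ℕ} {n : Fin m → ℕ} {A : Fin k → Fin m → ℕ}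
    (p : Fin m → ℝ)
    (V : ∀ i : Fin k, ∀ j : Fin m, Fin (A i j) → Matrix (Fin (n j)) (Fin (d i)) ℝ)
    (Y : ∀ j : Fin m, Matrix (Fin (n j)) (Fin (n j)) ℝ) : ℝ :=
  (∏ i : Fin k, (∑ j : Fin m, p j • ∑ a : Fin (A i j), (V i j a)ᵀ * Y j * V i j a).det) /
    ∏ j : Fin m, (Y j).det ^ (p j)

/-- The capacity `cap(V, p)` of a quiver datum: the infimum of the capacity functional
over all tuples of positive definite matrices. -/
noncomputable def cap {k m : ℕ} {d : Fin k → ℕ} {n : Fin m → ℕ} {A : Fin k → Fin m → ℕ}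
    (p : Fin m → ℝ)
    (V : ∀ i : Fin k, ∀ j : Fin m, Fin (A i j) → Matrix (Fin (n j)) (Fin (d i)) ℝ) : ℝ :=
  sInf { r : ℝ | ∃ Y : ∀ j : Fin m, Matrix (Fin (n j)) (Fin (n j)) ℝ,
    (∀ j, (Y j).PosDef) ∧ r = capVal p V Y }

/-- A quiver datum `(V, p)` is extremizable if it is feasible (`cap(V,p) > 0`) and the
infimum defining the capacity is attained at some tuple of positive definite matrices. -/
def Extremizable {k m : ℕ} {d : Fin k → ℕ} {n : Fin m → ℕ} {A : Fin k → Fin m → ℕ}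
    (p : Fin m → ℝ)
    (V : ∀ i : Fin k, ∀ j : Fin m, Fin (A i j) → Matrix (Fin (n j)) (Fin (d i)) ℝ) : Prop :=
  0 < cap p V ∧ ∃ Y : ∀ j : Fin m, Matrix (Fin (n j)) (Fin (n j)) ℝ,
    (∀ j, (Y j).PosDef) ∧ capVal p V Y = cap p V

/-- A quiver datum `(V, p)` is geometric. -/
def IsGeometric {k m : ℕ} {d : Fin k → ℕ} {n : Fin m → ℕ} {A : Fin k → Fin m → ℕ}
    (p : Fin m → ℝ)
    (V : ∀ i : Fin k, ∀ j : Fin m, Fin (A i j) → Matrix (Fin (n j)) (Fin (d i)) ℝ) : Prop :=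
  (∀ i, ∑ j : Fin m, p j • ∑ a : Fin (A i j), (V i j a)ᵀ * V i j a = 1) ∧
  (∀ j, ∑ i : Fin k, ∑ a : Fin (A i j), V i j a * (V i j a)ᵀ = 1)

/-!
Replacing `V a` by `(h j) (V a) (g i)⁻¹` multiplies the capacity functional by a positive constant
and reparametrizes its argument by `Y j ↦ (h j)ᵀ (Y j) (h j)`, so extremizers of the two data
correspond. It therefore suffices to relate geometric data to data extremized at the identity.

For a geometric datum, diagonalize the `Y j` by an orthogonal base change, which keeps the datum
geometric, and let `l j e` be the eigenvalues. In an orthonormal eigenbasis of the `i`-th matrix in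
the numerator, the first geometric condition makes each eigenvalue a convex combination of the
`l j e`; weighted AM-GM bounds it below by a geometric mean, and by the second condition the
exponents of `l j e` in the product over all `i` add up to `p j`. Hence the functional is at least
`1`, its value at the identity.

Conversely, an extremizer `Y` is moved to the identity by choosing `(h j)ᵀ (h j) = Y j` and
`(g i)ᵀ (g i)` equal to the `i`-th matrix of the numerator, and this already gives the first
geometric condition. The derivative at the identity of the logarithm of the functional in a
symmetric direction `H` is `∑ j, p j * tr ((G j - 1) (H j))`, with `G j = ∑ i, ∑ a, V a (V a)ᵀ`.
It vanishes, and `H j = G j - 1` yields `G j = 1`, the second geometric condition.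
-/

section Matrices

variable {ι κ : Type*} [Fintype ι] [DecidableEq ι]

lemma exists_orthogonal_transpose_mul_diagonal_mul_eq {M : Matrix ι ι ℝ} (hM : M.IsHermitian) :
    ∃ U ∈ orthogonalGroup ι ℝ, ∃ l : ι → ℝ, Uᵀ * diagonal l * U = M := by
  refine ⟨star hM.eigenvectorUnitary, Unitary.star_mem hM.eigenvectorUnitary.2,
    hM.eigenvalues, ?_⟩
  conv_rhs => rw [hM.spectral_theorem, Unitary.conjStarAlgAut_apply]
  simp [star_eq_conjTranspose]

lemma det_sq_of_mem_orthogonalGroup {R : Type*} [CommRing R] {U : Matrix ι ι R}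
    (hU : U ∈ orthogonalGroup ι R) : U.det ^ 2 = 1 := by
  simpa only [det_mul, det_transpose, det_one, ← sq] using
    congrArg det ((mem_orthogonalGroup_iff ι R).1 hU)

lemma posDef_transpose_mul_mul_iff {U M : Matrix ι ι ℝ} (hU : IsUnit U.det) :
    (Uᵀ * M * U).PosDef ↔ M.PosDef := by
  simpa [star_eq_conjTranspose] using
    IsUnit.posDef_star_left_conjugate_iff (x := M) ((isUnit_iff_isUnit_det U).2 hU)

open scoped MatrixOrder ComplexOrder in
lemma exists_isUnit_det_transpose_mul_self_eq {M : Matrix ι ι ℝ} (hM : M.PosDef) :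
    ∃ g : Matrix ι ι ℝ, IsUnit g.det ∧ gᵀ * g = M := by
  obtain ⟨g, hg, rfl⟩ :=
    CStarAlgebra.isStrictlyPositive_iff_eq_star_mul_self.1 hM.isStrictlyPositive
  exact ⟨g, (isUnit_iff_isUnit_det g).1 hg, by simp [star_eq_conjTranspose]⟩

lemma eventually_posDef_one_add_smul {ι : Type*} [Finite ι] [DecidableEq ι] {M : Matrix ι ι ℝ}
    (hM : M.IsHermitian) : ∀ᶠ t : ℝ in nhds 0, (1 + t • M).PosDef := by
  have := Fintype.ofFinite ι
  obtain ⟨U, hU, l, rfl⟩ := exists_orthogonal_transpose_mul_diagonal_mul_eq hM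
  have eigenvalues_pos : ∀ᶠ t : ℝ in nhds 0, ∀ e, 0 < 1 + t * l e :=
    Filter.eventually_all.2 fun e =>
      (by fun_prop : Continuous fun t : ℝ => 1 + t * l e).tendsto' 0 1 (by simp)
        |>.eventually_const_lt one_pos
  filter_upwards [eigenvalues_pos] with t ht
  have conj_eq : 1 + t • (Uᵀ * diagonal l * U) = Uᵀ * diagonal (fun e => 1 + t * l e) * U := by
    have : diagonal (fun e => 1 + t * l e) = 1 + t • diagonal l := by
      rw [← diagonal_one, ← diagonal_smul, diagonal_add]; rfl
    rw [this, Matrix.mul_add, Matrix.add_mul, Matrix.mul_one,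
      (mem_orthogonalGroup_iff' _ _).1 hU, Matrix.mul_smul, Matrix.smul_mul]
  rw [conj_eq, posDef_transpose_mul_mul_iff (UnitaryGroup.det_isUnit ⟨U, hU⟩)]
  exact posDef_diagonal_iff.2 ht

lemma hasDerivAt_log_det_one_add_smul (M : Matrix ι ι ℝ) :
    HasDerivAt (fun t : ℝ => Real.log (1 + t • M).det) M.trace 0 := by
  have hasDerivAt_det : HasDerivAt (fun t : ℝ => (1 + t • M).det) M.trace 0 := by
    have eval_det_eq (t : ℝ) :
        (det (1 + (Polynomial.X : Polynomial ℝ) • M.map Polynomial.C)).eval t =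
          (1 + t • M).det := by
      simp [eval_det, ← smul_eq_mul_diagonal]
    rw [← funext eval_det_eq, ← derivative_det_one_add_X_smul]
    exact Polynomial.hasDerivAt _ 0
  simpa using hasDerivAt_det.log (by simp)

lemma transpose_mul_diagonal_mul_apply_self {R : Type*} [CommSemiring R] (Q : Matrix ι κ R)
    (c : ι → R) (s : κ) : (Qᵀ * diagonal c * Q) s s = ∑ e, c e * Q e s ^ 2 := by
  rw [mul_apply]
  simp only [mul_diagonal, transpose_apply]
  exact Finset.sum_congr rfl fun e _ => by ring

variable [Fintype κ] [DecidableEq κ]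

-- Weighted AM-GM, column by column, with weights `w e * Q e s ^ 2`.
lemma prod_rpow_le_prod_transpose_mul_diagonal_mul {Q : Matrix ι κ ℝ} {w l : ι → ℝ}
    (hw : ∀ e, 0 ≤ w e) (hl : ∀ e, 0 ≤ l e) (hQ : Qᵀ * diagonal w * Q = 1) :
    ∏ e, l e ^ (w e * (Q * Qᵀ) e e) ≤ ∏ s, (Qᵀ * diagonal (w * l) * Q) s s := by
  have weight_nonneg (e : ι) (s : κ) : 0 ≤ w e * Q e s ^ 2 := mul_nonneg (hw e) (sq_nonneg _)
  calc ∏ e, l e ^ (w e * (Q * Qᵀ) e e)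
      = ∏ e, ∏ s, l e ^ (w e * Q e s ^ 2) := by
        refine Finset.prod_congr rfl fun e _ => ?_
        rw [← Real.rpow_sum_of_nonneg (hl e) fun s _ => weight_nonneg e s, ← Finset.mul_sum]
        simp only [mul_apply, transpose_apply, sq]
    _ = ∏ s, ∏ e, l e ^ (w e * Q e s ^ 2) := Finset.prod_comm
    _ ≤ ∏ s, (Qᵀ * diagonal (w * l) * Q) s s := by
        refine Finset.prod_le_prod
          (fun s _ => Finset.prod_nonneg fun e _ => Real.rpow_nonneg (hl e) _) fun s _ => ?_
        have weight_sum : ∑ e, w e * Q e s ^ 2 = 1 := by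
          rw [← transpose_mul_diagonal_mul_apply_self, hQ, one_apply_eq]
        refine (Real.geom_mean_le_arith_mean_weighted _ _ l (fun e _ => weight_nonneg e s)
          weight_sum fun e _ => hl e).trans_eq ?_
        rw [transpose_mul_diagonal_mul_apply_self]
        exact Finset.sum_congr rfl fun e _ => by simp only [Pi.mul_apply]; ring

-- Rotating the columns of `Q` to an eigenbasis makes the determinant a product of diagonal entries.
lemma prod_rpow_le_det_transpose_mul_diagonal_mul {Q : Matrix ι κ ℝ} {w l : ι → ℝ}
    (hw : ∀ e, 0 ≤ w e) (hl : ∀ e, 0 ≤ l e) (hQ : Qᵀ * diagonal w * Q = 1) :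
    ∏ e, l e ^ (w e * (Q * Qᵀ) e e) ≤ (Qᵀ * diagonal (w * l) * Q).det := by
  have hM : (Qᵀ * diagonal (w * l) * Q).IsHermitian := by
    simp [IsHermitian, Matrix.mul_assoc]
  obtain ⟨U, hU, μ, hμ⟩ := exists_orthogonal_transpose_mul_diagonal_mul_eq hM
  have hUU := (mem_orthogonalGroup_iff _ _).1 hU
  have conj_diagonal (c : ι → ℝ) :
      (Q * Uᵀ)ᵀ * diagonal c * (Q * Uᵀ) = U * (Qᵀ * diagonal c * Q) * Uᵀ := by
    simp only [transpose_mul, transpose_transpose, Matrix.mul_assoc]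
  have rotated_eq : (Q * Uᵀ)ᵀ * diagonal (w * l) * (Q * Uᵀ) = diagonal μ :=
    calc (Q * Uᵀ)ᵀ * diagonal (w * l) * (Q * Uᵀ)
        = (U * Uᵀ) * diagonal μ * (U * Uᵀ) := by
          rw [conj_diagonal, ← hμ]; simp only [Matrix.mul_assoc]
      _ = diagonal μ := by rw [hUU, Matrix.one_mul, Matrix.mul_one]
  calc ∏ e, l e ^ (w e * (Q * Qᵀ) e e)
      = ∏ e, l e ^ (w e * ((Q * Uᵀ) * (Q * Uᵀ)ᵀ) e e) := by
        have : (Q * Uᵀ) * (Q * Uᵀ)ᵀ = Q * (Uᵀ * U) * Qᵀ := by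
          simp only [transpose_mul, transpose_transpose, Matrix.mul_assoc]
        rw [this, (mem_orthogonalGroup_iff' _ _).1 hU, Matrix.mul_one]
    _ ≤ ∏ s, ((Q * Uᵀ)ᵀ * diagonal (w * l) * (Q * Uᵀ)) s s :=
        prod_rpow_le_prod_transpose_mul_diagonal_mul hw hl
          (by rw [conj_diagonal, hQ, Matrix.mul_one, hUU])
    _ = (Qᵀ * diagonal (w * l) * Q).det := by
        rw [rotated_eq, ← hμ, det_mul_right_comm, (mem_orthogonalGroup_iff' _ _).1 hU,
          Matrix.one_mul, det_diagonal]
        simp only [diagonal_apply_eq]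

end Matrices

section Quivers

variable {k m : ℕ} {d : Fin k → ℕ} {n : Fin m → ℕ} {A : Fin k → Fin m → ℕ} {p : Fin m → ℝ}
  {V : ∀ i : Fin k, ∀ j : Fin m, Fin (A i j) → Matrix (Fin (n j)) (Fin (d i)) ℝ}

/-- The completely positive map `Y ↦ (∑ j, p j ∑ a, (V a)ᵀ (Y j) (V a))ᵢ` of a quiver datum, whose
determinants are the factors of the numerator of the capacity functional. -/
def quiverMap (p : Fin m → ℝ)
    (V : ∀ i : Fin k, ∀ j : Fin m, Fin (A i j) → Matrix (Fin (n j)) (Fin (d i)) ℝ)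
    (Y : ∀ j : Fin m, Matrix (Fin (n j)) (Fin (n j)) ℝ) (i : Fin k) :
    Matrix (Fin (d i)) (Fin (d i)) ℝ :=
  ∑ j, p j • ∑ a, (V i j a)ᵀ * Y j * V i j a

/-- The left-hand side `∑ i, ∑ a, (V a) (V a)ᵀ` of the second geometric condition: the value at the
identity of the dual of `quiverMap` for the pairing `∑ j, p j * tr (X j * Y j)`. -/
def targetGram (V : ∀ i : Fin k, ∀ j : Fin m, Fin (A i j) → Matrix (Fin (n j)) (Fin (d i)) ℝ)
    (j : Fin m) : Matrix (Fin (n j)) (Fin (n j)) ℝ :=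
  ∑ i, ∑ a, V i j a * (V i j a)ᵀ

/-- The action of invertible matrices `g i` and `h j` on quiver data,
`V a ↦ (h j) (V a) (g i)⁻¹`. -/
noncomputable def baseChange (g : ∀ i : Fin k, Matrix (Fin (d i)) (Fin (d i)) ℝ)
    (h : ∀ j : Fin m, Matrix (Fin (n j)) (Fin (n j)) ℝ)
    (V : ∀ i : Fin k, ∀ j : Fin m, Fin (A i j) → Matrix (Fin (n j)) (Fin (d i)) ℝ) :
    ∀ i : Fin k, ∀ j : Fin m, Fin (A i j) → Matrix (Fin (n j)) (Fin (d i)) ℝ :=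
  fun i j a => h j * V i j a * (g i)⁻¹

/-- `Y` is an extremizer of `(V, p)`: a tuple of positive definite matrices at which the capacity
functional takes a positive value and attains its minimum. -/
structure IsExtremizer (p : Fin m → ℝ)
    (V : ∀ i : Fin k, ∀ j : Fin m, Fin (A i j) → Matrix (Fin (n j)) (Fin (d i)) ℝ)
    (Y : ∀ j : Fin m, Matrix (Fin (n j)) (Fin (n j)) ℝ) : Prop where
  posDef : ∀ j, (Y j).PosDef
  capVal_pos : 0 < capVal p V Y
  capVal_le : ∀ Z : ∀ j : Fin m, Matrix (Fin (n j)) (Fin (n j)) ℝ,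
    (∀ j, (Z j).PosDef) → capVal p V Y ≤ capVal p V Z

/-- The matrices `V a`, `a ∈ A i j`, for fixed `i` and all `j`, stacked on top of each other; on
diagonal tuples `quiverMap` is then `Qᵀ D Q` for a single `Q` and a diagonal matrix `D`. -/
def stackedMatrix
    (V : ∀ i : Fin k, ∀ j : Fin m, Fin (A i j) → Matrix (Fin (n j)) (Fin (d i)) ℝ) (i : Fin k) :
    Matrix (Σ j, Fin (A i j) × Fin (n j)) (Fin (d i)) ℝ :=
  of fun x s => V i x.1 x.2.1 x.2.2 s

variable {Y H : ∀ j : Fin m, Matrix (Fin (n j)) (Fin (n j)) ℝ}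

lemma capVal_eq_prod_det_quiverMap_div :
    capVal p V Y = (∏ i, (quiverMap p V Y i).det) / ∏ j, (Y j).det ^ p j := rfl

lemma isGeometric_iff :
    IsGeometric p V ↔ (∀ i, quiverMap p V 1 i = 1) ∧ ∀ j, targetGram V j = 1 := by
  simp only [IsGeometric, quiverMap, targetGram, Pi.one_apply, Matrix.mul_one]

lemma quiverMap_add_smul (t : ℝ) (i : Fin k) :
    quiverMap p V (Y + t • H) i = quiverMap p V Y i + t • quiverMap p V H i := by
  simp only [quiverMap, Pi.add_apply, Pi.smul_apply, Matrix.mul_add, Matrix.add_mul,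
    Finset.sum_add_distrib, smul_add, Finset.smul_sum, Matrix.mul_smul, Matrix.smul_mul,
    smul_comm t]

lemma isHermitian_quiverMap (hY : ∀ j, (Y j).IsHermitian) (i : Fin k) :
    (quiverMap p V Y i).IsHermitian := by
  have transpose_eq (j : Fin m) : (Y j)ᵀ = Y j := by simpa using (hY j).eq
  simp [quiverMap, IsHermitian, transpose_sum, Matrix.mul_assoc, transpose_eq]

lemma posSemidef_quiverMap (hp : ∀ j, 0 ≤ p j) (hY : ∀ j, (Y j).PosDef) (i : Fin k) :
    (quiverMap p V Y i).PosSemidef :=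
  posSemidef_sum _ fun j _ => .smul (posSemidef_sum _ fun a _ => by
    simpa using (hY j).posSemidef.conjTranspose_mul_mul_same (V i j a)) (hp j)

lemma isHermitian_targetGram (j : Fin m) : (targetGram V j).IsHermitian := by
  simp [targetGram, IsHermitian, transpose_sum]

lemma sum_trace_quiverMap :
    ∑ i, (quiverMap p V Y i).trace = ∑ j, p j * (targetGram V j * Y j).trace := by
  simp only [quiverMap, targetGram, trace_sum, trace_smul, smul_eq_mul, Finset.sum_mul,
    Finset.mul_sum]
  rw [Finset.sum_comm]
  refine Finset.sum_congr rfl fun j _ => Finset.sum_congr rfl fun i _ =>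
    Finset.sum_congr rfl fun a _ => ?_
  rw [trace_mul_comm, Matrix.mul_assoc]

lemma prod_det_rpow_pos (hY : ∀ j, (Y j).PosDef) : 0 < ∏ j, (Y j).det ^ p j :=
  Finset.prod_pos fun j _ => Real.rpow_pos_of_pos (hY j).det_pos _

lemma capVal_one (hV : ∀ i, quiverMap p V 1 i = 1) : capVal p V 1 = 1 := by
  simp [capVal_eq_prod_det_quiverMap_div, hV]

lemma capVal_nonneg (hp : ∀ j, 0 ≤ p j) (hY : ∀ j, (Y j).PosDef) : 0 ≤ capVal p V Y :=
  div_nonneg (Finset.prod_nonneg fun i _ => (posSemidef_quiverMap hp hY i).det_nonneg)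
    (prod_det_rpow_pos hY).le

lemma log_capVal (hY : ∀ j, (Y j).PosDef) (hM : ∀ i, (quiverMap p V Y i).PosDef) :
    Real.log (capVal p V Y) =
      ∑ i, Real.log (quiverMap p V Y i).det - ∑ j, p j * Real.log (Y j).det := by
  rw [capVal_eq_prod_det_quiverMap_div,
    Real.log_div (Finset.prod_pos fun i _ => (hM i).det_pos).ne' (prod_det_rpow_pos hY).ne',
    Real.log_prod fun i _ => (hM i).det_pos.ne',
    Real.log_prod fun j _ => (Real.rpow_pos_of_pos (hY j).det_pos _).ne']
  simp only [Real.log_rpow (hY _).det_pos]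

lemma extremizable_iff_exists_isExtremizer (hp : ∀ j, 0 ≤ p j) :
    Extremizable p V ↔ ∃ Y, IsExtremizer p V Y := by
  constructor
  · rintro ⟨cap_pos, Y, hY, capVal_eq⟩
    refine ⟨Y, hY, capVal_eq ▸ cap_pos, fun Z hZ => ?_⟩
    rw [capVal_eq]
    refine csInf_le ⟨0, ?_⟩ ⟨Z, hZ, rfl⟩
    rintro _ ⟨X, hX, rfl⟩
    exact capVal_nonneg hp hX
  · rintro ⟨Y, hY⟩
    have isLeast : IsLeast {r : ℝ | ∃ Z : ∀ j : Fin m, Matrix (Fin (n j)) (Fin (n j)) ℝ,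
        (∀ j, (Z j).PosDef) ∧ r = capVal p V Z} (capVal p V Y) := by
      refine ⟨⟨Y, hY.posDef, rfl⟩, ?_⟩
      rintro _ ⟨Z, hZ, rfl⟩
      exact hY.capVal_le Z hZ
    have cap_eq : cap p V = capVal p V Y := isLeast.csInf_eq
    exact ⟨cap_eq ▸ hY.capVal_pos, Y, hY.posDef, cap_eq.symm⟩

lemma IsExtremizer.posDef_quiverMap (hY : IsExtremizer p V Y) (hp : ∀ j, 0 ≤ p j) (i : Fin k) :
    (quiverMap p V Y i).PosDef := by
  refine (posSemidef_quiverMap hp hY.posDef i).posDef_iff_det_ne_zero.2 fun det_eq_zero => ?_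
  refine hY.capVal_pos.ne' ?_
  rw [capVal_eq_prod_det_quiverMap_div, Finset.prod_eq_zero (Finset.mem_univ i) det_eq_zero,
    zero_div]

section BaseChange

variable {g : ∀ i : Fin k, Matrix (Fin (d i)) (Fin (d i)) ℝ}
  {h : ∀ j : Fin m, Matrix (Fin (n j)) (Fin (n j)) ℝ}

lemma quiverMap_baseChange (i : Fin k) :
    quiverMap p (baseChange g h V) Y i =
      ((g i)⁻¹)ᵀ * quiverMap p V (fun j => (h j)ᵀ * Y j * h j) i * (g i)⁻¹ := by
  simp only [quiverMap, baseChange, Finset.mul_sum, Finset.sum_mul, transpose_mul,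
    Matrix.mul_assoc, mul_smul_comm, smul_mul_assoc]

lemma capVal_baseChange (hh : ∀ j, IsUnit (h j).det) (hY : ∀ j, (Y j).PosDef) :
    capVal p (baseChange g h V) Y =
      (∏ j, ((h j).det ^ 2) ^ p j) / (∏ i, (g i).det ^ 2) *
        capVal p V (fun j => (h j)ᵀ * Y j * h j) := by
  have det_conj_rpow (j : Fin m) :
      ((h j)ᵀ * Y j * h j).det ^ p j = ((h j).det ^ 2) ^ p j * (Y j).det ^ p j := by
    rw [← Real.mul_rpow (sq_nonneg _) (hY j).det_pos.le, det_mul, det_mul, det_transpose]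
    ring_nf
  have det_quiverMap (i : Fin k) : (quiverMap p (baseChange g h V) Y i).det =
      (quiverMap p V (fun j => (h j)ᵀ * Y j * h j) i).det / (g i).det ^ 2 := by
    rw [quiverMap_baseChange, det_mul, det_mul, det_transpose, det_nonsing_inv,
      Ring.inverse_eq_inv']
    ring
  have det_h_ne_zero : ∏ j, ((h j).det ^ 2) ^ p j ≠ 0 := Finset.prod_ne_zero_iff.2 fun j _ =>
    (Real.rpow_pos_of_pos (sq_pos_of_ne_zero (hh j).ne_zero) _).ne'
  simp only [capVal_eq_prod_det_quiverMap_div, det_quiverMap, det_conj_rpow,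
    Finset.prod_mul_distrib, Finset.prod_div_distrib]
  field_simp

lemma isExtremizer_baseChange_iff (hg : ∀ i, IsUnit (g i).det) (hh : ∀ j, IsUnit (h j).det) :
    IsExtremizer p (baseChange g h V) Y ↔ IsExtremizer p V (fun j => (h j)ᵀ * Y j * h j) := by
  have factor_pos : 0 < (∏ j, ((h j).det ^ 2) ^ p j) / ∏ i, (g i).det ^ 2 :=
    div_pos
      (Finset.prod_pos fun j _ => Real.rpow_pos_of_pos (sq_pos_of_ne_zero (hh j).ne_zero) _)
      (Finset.prod_pos fun i _ => sq_pos_of_ne_zero (hg i).ne_zero)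
  have posDef_conj {Z : ∀ j : Fin m, Matrix (Fin (n j)) (Fin (n j)) ℝ} :
      (∀ j, ((h j)ᵀ * Z j * h j).PosDef) ↔ ∀ j, (Z j).PosDef :=
    forall_congr' fun j => posDef_transpose_mul_mul_iff (hh j)
  constructor
  · rintro ⟨hY, capVal_pos, capVal_le⟩
    rw [capVal_baseChange hh hY] at capVal_pos
    refine ⟨posDef_conj.2 hY, pos_of_mul_pos_right capVal_pos factor_pos.le, fun Z hZ => ?_⟩
    obtain ⟨X, rfl⟩ : ∃ X : ∀ j, Matrix (Fin (n j)) (Fin (n j)) ℝ,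
        (fun j => (h j)ᵀ * X j * h j) = Z := by
      refine ⟨fun j => ((h j)⁻¹)ᵀ * Z j * (h j)⁻¹, funext fun j => ?_⟩
      rw [← Matrix.mul_assoc, ← Matrix.mul_assoc, ← transpose_mul, nonsing_inv_mul _ (hh j),
        transpose_one, Matrix.one_mul, nonsing_inv_mul_cancel_right _ _ (hh j)]
    have hX := posDef_conj.1 hZ
    have := capVal_le X hX
    rwa [capVal_baseChange hh hY, capVal_baseChange hh hX, mul_le_mul_iff_right₀ factor_pos] at this
  · rintro ⟨hY, capVal_pos, capVal_le⟩
    rw [posDef_conj] at hY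
    refine ⟨hY, ?_, fun Z hZ => ?_⟩
    · rw [capVal_baseChange hh hY]
      exact mul_pos factor_pos capVal_pos
    · rw [capVal_baseChange hh hY, capVal_baseChange hh hZ]
      exact mul_le_mul_of_nonneg_left (capVal_le _ (posDef_conj.2 hZ)) factor_pos.le

lemma IsGeometric.baseChange_one (hV : IsGeometric p V)
    (hh : ∀ j, h j ∈ orthogonalGroup (Fin (n j)) ℝ) : IsGeometric p (baseChange 1 h V) := by
  obtain ⟨quiverMap_one, targetGram_eq_one⟩ := isGeometric_iff.1 hV
  refine isGeometric_iff.2 ⟨fun i => ?_, fun j => ?_⟩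
  · have conj_one : (fun j => (h j)ᵀ * (1 : ∀ j, Matrix (Fin (n j)) (Fin (n j)) ℝ) j * h j) = 1 :=
      funext fun j => by
        rw [Pi.one_apply, Matrix.mul_one, (mem_orthogonalGroup_iff' _ _).1 (hh j)]
    rw [quiverMap_baseChange, conj_one, quiverMap_one]
    simp
  · calc targetGram (baseChange 1 h V) j = h j * targetGram V j * (h j)ᵀ := by
          simp [targetGram, baseChange, Finset.mul_sum, Finset.sum_mul, Matrix.mul_assoc]
      _ = 1 := by
          rw [targetGram_eq_one, Matrix.mul_one,
            (mem_orthogonalGroup_iff _ _).1 (hh j)]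

end BaseChange

section Geometric

lemma quiverMap_diagonal (l : ∀ j, Fin (n j) → ℝ) (i : Fin k) :
    quiverMap p V (fun j => diagonal (l j)) i =
      (stackedMatrix V i)ᵀ *
        diagonal ((fun x : Σ j, Fin (A i j) × Fin (n j) => p x.1) * fun x => l x.1 x.2.2) *
          stackedMatrix V i := by
  ext s t
  rw [mul_apply]
  simp only [quiverMap, stackedMatrix, Matrix.sum_apply, Matrix.smul_apply, smul_eq_mul,
    mul_diagonal, transpose_apply, of_apply, Fintype.sum_sigma, Fintype.sum_prod_type,
    Finset.mul_sum, Pi.mul_apply]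
  refine Finset.sum_congr rfl fun j _ => Finset.sum_congr rfl fun a _ => ?_
  rw [mul_apply, Finset.mul_sum]
  simp only [mul_diagonal, transpose_apply]
  exact Finset.sum_congr rfl fun e _ => by ring

lemma prod_rpow_le_det_quiverMap_diagonal (hp : ∀ j, 0 ≤ p j) {l : ∀ j, Fin (n j) → ℝ}
    (hl : ∀ j e, 0 ≤ l j e) {i : Fin k} (hV : quiverMap p V 1 i = 1) :
    ∏ j, ∏ a, ∏ e, l j e ^ (p j * (V i j a * (V i j a)ᵀ) e e) ≤
      (quiverMap p V (fun j => diagonal (l j)) i).det := by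
  have stacked_one :
      (stackedMatrix V i)ᵀ * diagonal (fun x : Σ j, Fin (A i j) × Fin (n j) => p x.1) *
        stackedMatrix V i = 1 := by
    have diagonal_eq_one : (fun j => diagonal fun _ : Fin (n j) => (1 : ℝ)) = 1 :=
      funext fun j => diagonal_one
    rw [← hV, ← diagonal_eq_one, quiverMap_diagonal]
    simp only [Pi.mul_def, mul_one]
  rw [quiverMap_diagonal]
  refine le_of_eq_of_le ?_ <| prod_rpow_le_det_transpose_mul_diagonal_mul
    (fun x => hp x.1) (fun x => hl x.1 x.2.2) stacked_one
  simp only [Fintype.prod_sigma, Fintype.prod_prod_type]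
  rfl

lemma IsGeometric.one_le_capVal_diagonal (hV : IsGeometric p V) (hp : ∀ j, 0 ≤ p j)
    {l : ∀ j, Fin (n j) → ℝ} (hl : ∀ j e, 0 < l j e) :
    1 ≤ capVal p V (fun j => diagonal (l j)) := by
  obtain ⟨quiverMap_one, targetGram_eq_one⟩ := isGeometric_iff.1 hV
  have exponent_sum (j : Fin m) (e : Fin (n j)) :
      ∑ i, ∑ a, p j * (V i j a * (V i j a)ᵀ) e e = p j := by
    have : targetGram V j e e = 1 := by rw [targetGram_eq_one, one_apply_eq]
    simp only [← Finset.mul_sum, ← Matrix.sum_apply]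
    rw [← targetGram, this, mul_one]
  rw [capVal_eq_prod_det_quiverMap_div,
    one_le_div (prod_det_rpow_pos fun j => posDef_diagonal_iff.2 (hl j))]
  calc ∏ j, (diagonal (l j)).det ^ p j
      = ∏ j, ∏ e, ∏ i, ∏ a, l j e ^ (p j * (V i j a * (V i j a)ᵀ) e e) := by
        refine Finset.prod_congr rfl fun j _ => ?_
        rw [det_diagonal, ← Real.finsetProd_rpow _ _ fun e _ => (hl j e).le]
        simp only [← Real.rpow_sum_of_pos (hl j _), exponent_sum]
    _ = ∏ i, ∏ j, ∏ a, ∏ e, l j e ^ (p j * (V i j a * (V i j a)ᵀ) e e) := by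
        conv_rhs => rw [Finset.prod_comm]
        refine Finset.prod_congr rfl fun j _ => ?_
        rw [Finset.prod_comm]
        exact Finset.prod_congr rfl fun i _ => Finset.prod_comm
    _ ≤ ∏ i, (quiverMap p V (fun j => diagonal (l j)) i).det :=
        Finset.prod_le_prod
          (fun i _ => Finset.prod_nonneg fun j _ => Finset.prod_nonneg fun a _ =>
            Finset.prod_nonneg fun e _ => Real.rpow_nonneg (hl j e).le _)
          fun i _ => prod_rpow_le_det_quiverMap_diagonal hp (fun j e => (hl j e).le)
            (quiverMap_one i)

lemma IsGeometric.one_le_capVal (hV : IsGeometric p V) (hp : ∀ j, 0 ≤ p j)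
    (hY : ∀ j, (Y j).PosDef) : 1 ≤ capVal p V Y := by
  choose U hU l hUl using fun j => exists_orthogonal_transpose_mul_diagonal_mul_eq (hY j).1
  have isUnit_det (j : Fin m) : IsUnit (U j).det := UnitaryGroup.det_isUnit ⟨U j, hU j⟩
  have posDef_diagonal (j : Fin m) : (diagonal (l j)).PosDef :=
    (posDef_transpose_mul_mul_iff (isUnit_det j)).1 ((hUl j).symm ▸ hY j)
  have capVal_eq : capVal p (baseChange 1 U V) (fun j => diagonal (l j)) = capVal p V Y := by
    simp [capVal_baseChange isUnit_det posDef_diagonal, det_sq_of_mem_orthogonalGroup (hU _), hUl]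
  rw [← capVal_eq]
  exact (hV.baseChange_one hU).one_le_capVal_diagonal hp
    fun j => posDef_diagonal_iff.1 (posDef_diagonal j)

lemma IsGeometric.isExtremizer_one (hV : IsGeometric p V) (hp : ∀ j, 0 ≤ p j) :
    IsExtremizer p V 1 := by
  have capVal_one_eq : capVal p V 1 = 1 := capVal_one (isGeometric_iff.1 hV).1
  refine ⟨fun j => PosDef.one, capVal_one_eq ▸ one_pos, fun Z hZ => ?_⟩
  rw [capVal_one_eq]
  exact hV.one_le_capVal hp hZ

end Geometric

section Critical

lemma IsExtremizer.sum_trace_quiverMap_eq (hext : IsExtremizer p V 1)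
    (hV : ∀ i, quiverMap p V 1 i = 1) (hH : ∀ j, (H j).IsHermitian) :
    ∑ i, (quiverMap p V H i).trace = ∑ j, p j * (H j).trace := by
  let F : ℝ → ℝ := fun t =>
    ∑ i, Real.log (1 + t • quiverMap p V H i).det - ∑ j, p j * Real.log (1 + t • H j).det
  have hasDerivAt_F :
      HasDerivAt F (∑ i, (quiverMap p V H i).trace - ∑ j, p j * (H j).trace) 0 :=
    .sub (.fun_sum fun i _ => hasDerivAt_log_det_one_add_smul _)
      (.fun_sum fun j _ => (hasDerivAt_log_det_one_add_smul _).const_mul (p j))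
  have isLocalMin_F : IsLocalMin F 0 := by
    filter_upwards [
      Filter.eventually_all.2 fun j => eventually_posDef_one_add_smul (hH j),
      Filter.eventually_all.2 fun i =>
        eventually_posDef_one_add_smul (isHermitian_quiverMap (p := p) (V := V) hH i)]
      with t posDef_t posDef_quiverMap_t
    have quiverMap_t (i : Fin k) :
        quiverMap p V (1 + t • H) i = 1 + t • quiverMap p V H i := by
      rw [quiverMap_add_smul, hV]
    calc F 0 = Real.log (capVal p V 1) := by simp [F, capVal_one hV]
      _ ≤ Real.log (capVal p V (1 + t • H)) :=
        Real.log_le_log hext.capVal_pos (hext.capVal_le _ posDef_t)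
      _ = F t := by
        rw [log_capVal (Y := 1 + t • H) posDef_t fun i => quiverMap_t i ▸ posDef_quiverMap_t i]
        simp only [quiverMap_t]
        rfl
  exact sub_eq_zero.1 (isLocalMin_F.hasDerivAt_eq_zero hasDerivAt_F)

lemma IsExtremizer.targetGram_eq_one (hext : IsExtremizer p V 1) (hp : ∀ j, 0 < p j)
    (hV : ∀ i, quiverMap p V 1 i = 1) (j : Fin m) : targetGram V j = 1 := by
  let H : ∀ j, Matrix (Fin (n j)) (Fin (n j)) ℝ := fun j => targetGram V j - 1
  have hH (j : Fin m) : (H j).IsHermitian := (isHermitian_targetGram j).sub isHermitian_one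
  have sum_eq_zero : ∑ j, p j * ((H j)ᴴ * H j).trace = 0 :=
    calc ∑ j, p j * ((H j)ᴴ * H j).trace
        = ∑ j, p j * (targetGram V j * H j).trace - ∑ j, p j * (H j).trace := by
          simp only [(hH _).eq, ← Finset.sum_sub_distrib, ← mul_sub, ← trace_sub, H,
            Matrix.sub_mul, Matrix.one_mul]
      _ = 0 := by
          rw [← sum_trace_quiverMap, hext.sum_trace_quiverMap_eq hV hH, sub_self]
  have trace_eq_zero : p j * ((H j)ᴴ * H j).trace = 0 :=
    (Finset.sum_eq_zero_iff_of_nonneg fun j _ => mul_nonneg (hp j).le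
      (posSemidef_conjTranspose_mul_self (H j)).trace_nonneg).1 sum_eq_zero j (Finset.mem_univ j)
  exact sub_eq_zero.1 <| trace_conjTranspose_mul_self_eq_zero_iff.1 <|
    (mul_eq_zero.1 trace_eq_zero).resolve_left (hp j).ne'

lemma IsExtremizer.exists_isGeometric_baseChange (hY : IsExtremizer p V Y)
    (hp : ∀ j, 0 < p j) :
    ∃ g h, (∀ i, IsUnit (g i).det) ∧ (∀ j, IsUnit (h j).det) ∧
      IsGeometric p (baseChange g h V) := by
  choose g hg hgg using fun i =>
    exists_isUnit_det_transpose_mul_self_eq (hY.posDef_quiverMap (fun j => (hp j).le) i)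
  choose h hh hhh using fun j => exists_isUnit_det_transpose_mul_self_eq (hY.posDef j)
  have conj_one : (fun j => (h j)ᵀ * (1 : ∀ j, Matrix (Fin (n j)) (Fin (n j)) ℝ) j * h j) = Y :=
    funext fun j => by rw [Pi.one_apply, Matrix.mul_one, hhh]
  have isExtremizer_one : IsExtremizer p (baseChange g h V) 1 :=
    (isExtremizer_baseChange_iff hg hh).2 (conj_one.symm ▸ hY)
  have quiverMap_one (i : Fin k) : quiverMap p (baseChange g h V) 1 i = 1 := by
    rw [quiverMap_baseChange, conj_one, ← hgg, ← Matrix.mul_assoc, ← transpose_mul,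
      mul_nonsing_inv _ (hg i), transpose_one, Matrix.one_mul, mul_nonsing_inv _ (hg i)]
  exact ⟨g, h, hg, hh, isGeometric_iff.2
    ⟨quiverMap_one, isExtremizer_one.targetGram_eq_one hp quiverMap_one⟩⟩

end Critical

end Quivers

theorem extremizable_iff_transform_to_geometric_general {k m : ℕ}
    {d : Fin k → ℕ} {n : Fin m → ℕ} {A : Fin k → Fin m → ℕ} {p : Fin m → ℝ}
    (hp : ∀ j, 0 < p j)
    (V : ∀ i : Fin k, ∀ j : Fin m, Fin (A i j) → Matrix (Fin (n j)) (Fin (d i)) ℝ) :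
    Extremizable p V ↔
      ∃ (g : ∀ i : Fin k, Matrix (Fin (d i)) (Fin (d i)) ℝ)
        (h : ∀ j : Fin m, Matrix (Fin (n j)) (Fin (n j)) ℝ),
        (∀ i, IsUnit (g i).det) ∧ (∀ j, IsUnit (h j).det) ∧
        IsGeometric p (fun i j a => h j * V i j a * (g i)⁻¹) := by
  have hp_nonneg (j : Fin m) : 0 ≤ p j := (hp j).le
  rw [extremizable_iff_exists_isExtremizer hp_nonneg]
  constructor
  · rintro ⟨Y, hY⟩
    exact hY.exists_isGeometric_baseChange hp
  · rintro ⟨g, h, hg, hh, hW⟩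
    exact ⟨_, (isExtremizer_baseChange_iff hg hh).1 (IsGeometric.isExtremizer_one hW hp_nonneg)⟩

/-- A quiver datum `(V, p)` is extremizable if and only if there exist
invertible matrices `g_i ∈ GL(d_i, ℝ)` and `h_j ∈ GL(n_j, ℝ)` such that the transformed
datum `((h_j V_a g_i⁻¹), p)` is geometric. -/
theorem extremizable_iff_transform_to_geometric {k m : ℕ} (hk : 0 < k) (hm : 0 < m)
    {d : Fin k → ℕ} {n : Fin m → ℕ} {A : Fin k → Fin m → ℕ} {p : Fin m → ℝ}
    (hd : ∀ i, 0 < d i) (hn : ∀ j, 0 < n j) (hp : ∀ j, 0 < p j)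
    (hbal : ∑ i : Fin k, (d i : ℝ) = ∑ j : Fin m, p j * (n j : ℝ))
    (V : ∀ i : Fin k, ∀ j : Fin m, Fin (A i j) → Matrix (Fin (n j)) (Fin (d i)) ℝ) :
    Extremizable p V ↔
      ∃ (g : ∀ i : Fin k, Matrix (Fin (d i)) (Fin (d i)) ℝ)
        (h : ∀ j : Fin m, Matrix (Fin (n j)) (Fin (n j)) ℝ),
        (∀ i, IsUnit (g i).det) ∧ (∀ j, IsUnit (h j).det) ∧
        IsGeometric p (fun i j a => h j * V i j a * (g i)⁻¹) := by
  exact extremizable_iff_transform_to_geometric_general hp V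
end

section
/- Assume p_1,…,p_m are positive rational numbers. A quiver datum (V, p) is feasible (i.e., cap(V, p) > 0) if and only if V is p-semi-stable. -/
open Matrix BigOperators

/-- A representation `V` is `p`-semi-stable: every tuple of subspaces compatible with all
the linear maps `V_a` satisfies `∑_i dim U_i ≤ ∑_j p_j dim U_j`. -/
def Semistable {k m : ℕ} {d : Fin k → ℕ} {n : Fin m → ℕ} {A : Fin k → Fin m → ℕ}
    (p : Fin m → ℝ)
    (V : ∀ i : Fin k, ∀ j : Fin m, Fin (A i j) → Matrix (Fin (n j)) (Fin (d i)) ℝ) : Prop :=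
  ∀ (U1 : ∀ i : Fin k, Submodule ℝ (Fin (d i) → ℝ))
    (U2 : ∀ j : Fin m, Submodule ℝ (Fin (n j) → ℝ)),
    (∀ i j a, (U1 i).map (V i j a).mulVecLin ≤ U2 j) →
    ∑ i : Fin k, (Module.finrank ℝ (U1 i) : ℝ) ≤
      ∑ j : Fin m, p j * (Module.finrank ℝ (U2 j) : ℝ)

/-! Read the `V_a` in orthonormal eigenframes of the `Y_j`: the numerator of the capacity functional
becomes `det (Wᵀ Λ W)`, where `W` is the block diagonal matrix of frame rows and `Λ` carries the
eigenvalues `λ`. Subspaces cut out by frame vectors turn semi-stability into a rank condition on the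
rows of `W`: those labelled by any set `S` of frame vectors have rank at least the `p`-weight of
`S`. Hence the basis of rows picked greedily from the largest eigenvalue down has a monomial in `λ`
dominating `∏ λ ^ p` (majorization; the total weights agree by the dimension balance). The
corresponding term of the Cauchy–Binet expansion bounds `det (Wᵀ Λ W)` below, uniformly because
orthonormal frames form a compact space.

Conversely, let `Y` degenerate as `Q + ε P`, where `Q` vanishes on the subspaces at the target
vertices. For a compatible tuple of subspaces the capacity functional is then
`ε ^ (∑ dim U_i - ∑ p_j dim U_j)` times a polynomial in `ε`, so a destabilizing tuple forces the
capacity to be zero. -/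

section DeterminantBounds

open scoped ComplexOrder MatrixOrder

variable {𝕜 N T : Type*} [RCLike 𝕜] [Fintype T] [DecidableEq T]

lemma transpose_mul_diagonal_mul_nonneg [Finite N] (W : Matrix T N ℝ) {μ : T → ℝ} (hμ : 0 ≤ μ) :
    0 ≤ Wᵀ * diagonal μ * W := by
  simpa [nonneg_iff_posSemidef] using (PosSemidef.diagonal hμ).conjTranspose_mul_mul_same W

lemma transpose_mul_diagonal_mul_mono [Finite N] (W : Matrix T N ℝ) {μ ν : T → ℝ} (h : ν ≤ μ) :
    Wᵀ * diagonal ν * W ≤ Wᵀ * diagonal μ * W := by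
  rw [← sub_nonneg, ← Matrix.sub_mul, ← Matrix.mul_sub, diagonal_sub]
  exact transpose_mul_diagonal_mul_nonneg W (sub_nonneg.2 h)

variable [Fintype N] [DecidableEq N]

lemma one_le_det {A : Matrix N N 𝕜} (hA : 1 ≤ A) : 1 ≤ A.det := by
  have hB : (A - 1).PosSemidef := le_iff.1 hA
  set U := hB.1.eigenvectorUnitary
  have diagonalized :
      A = Unitary.conjStarAlgAut 𝕜 _ U (diagonal fun i => 1 + (hB.1.eigenvalues i : 𝕜)) := by
    rw [← diagonal_add, diagonal_one, map_add, map_one]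
    exact (add_sub_cancel 1 A).symm.trans (congrArg (1 + ·) hB.1.spectral_theorem)
  rw [diagonalized, Unitary.conjStarAlgAut_apply, det_mul_right_comm,
    Unitary.mul_star_self_of_mem U.2, one_mul, det_diagonal]
  exact Finset.one_le_prod fun i => by simpa using hB.eigenvalues_nonneg i

lemma det_le_det_of_nonneg_of_le {A B : Matrix N N 𝕜} (hB : 0 ≤ B) (hBA : B ≤ A) :
    B.det ≤ A.det := by
  by_cases hdet : B.det = 0
  · exact hdet.trans_le (hB.trans hBA).posSemidef.det_nonneg
  obtain ⟨G, rfl⟩ := CStarAlgebra.nonneg_iff_eq_star_mul_self.1 hB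
  have hG : IsUnit G.det := isUnit_iff_ne_zero.2 fun h => hdet (by rw [det_mul, h, mul_zero])
  have inv_star_mul : star G⁻¹ * star G = 1 := by rw [← star_mul, mul_nonsing_inv G hG, star_one]
  have star_mul_inv : star G * star G⁻¹ = 1 := by rw [← star_mul, nonsing_inv_mul G hG, star_one]
  obtain ⟨C, hC, rfl⟩ : ∃ C, 1 ≤ C ∧ A = star G * C * G := by
    refine ⟨star G⁻¹ * A * G⁻¹, ?_, ?_⟩
    · have := star_left_conjugate_le_conjugate hBA G⁻¹
      rwa [← mul_assoc, inv_star_mul, one_mul, mul_nonsing_inv G hG] at this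
    · simp only [← mul_assoc, star_mul_inv, one_mul]
      rw [mul_assoc, nonsing_inv_mul G hG, mul_one]
  calc (star G * G).det ≤ (star G * G).det * C.det :=
        le_mul_of_one_le_right hB.posSemidef.det_nonneg (one_le_det hC)
    _ = (star G * C * G).det := by rw [det_mul, det_mul, det_mul, mul_right_comm]

lemma sq_det_submatrix_mul_prod_le_det (W : Matrix T N ℝ) {μ : T → ℝ} (hμ : 0 ≤ μ) (c : N → T) :
    (W.submatrix c id).det ^ 2 * ∏ x, μ (c x) ≤ (Wᵀ * diagonal μ * W).det := by
  set F := W.submatrix c id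
  have det_selected : (Fᵀ * diagonal (μ ∘ c) * F).det = F.det ^ 2 * ∏ x, μ (c x) := by
    simp only [det_mul, det_transpose, det_diagonal, Function.comp_apply]
    ring
  rw [← det_selected]
  by_cases hc : Function.Injective c
  · set ν : T → ℝ := (Set.range c).indicator μ
    have selected_eq : Fᵀ * diagonal (μ ∘ c) * F = Wᵀ * diagonal ν * W := by
      ext x y
      simp only [mul_apply (M := _ * _), mul_diagonal, transpose_apply]
      refine Fintype.sum_of_injective c hc _ _ (fun t ht => ?_) fun z => ?_
      · simp [ν, Set.indicator_of_notMem ht]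
      · simp [ν, F]
    rw [selected_eq]
    refine det_le_det_of_nonneg_of_le (transpose_mul_diagonal_mul_nonneg W ?_)
      (transpose_mul_diagonal_mul_mono W ?_)
    · exact Set.indicator_nonneg fun t _ => hμ t
    · exact Set.indicator_le_self' fun t _ => hμ t
  · obtain ⟨x, y, hxy, hne⟩ := Function.not_injective_iff.1 hc
    rw [det_selected, det_zero_of_row_eq hne (by ext; simp [F, hxy])]
    simpa using (nonneg_iff_posSemidef.1 (transpose_mul_diagonal_mul_nonneg W hμ)).det_nonneg

end DeterminantBounds

lemma det_blockDiagonal' {R o : Type*} [CommRing R] [Fintype o] [LinearOrder o] {β : o → Type*}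
    [∀ i, Fintype (β i)] [∀ i, DecidableEq (β i)] (M : ∀ i, Matrix (β i) (β i) R) :
    (blockDiagonal' M).det = ∏ i, (M i).det := by
  rw [(blockTriangular_blockDiagonal' M).det_fintype]
  refine Finset.prod_congr rfl fun i _ => ?_
  rw [← det_submatrix_equiv_self (Equiv.sigmaSubtype i).symm]
  congr 1
  ext x y
  exact blockDiagonal'_apply_eq M i x y

section Majorization

lemma sum_mul_sub_nonneg {ι R : Type*} [CommRing R] [LinearOrder R] [IsStrictOrderedRing R]
    (s : Finset ι) (b f : ι → R) (m : R) (hm : ∀ i ∈ s, m ≤ f i)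
    (hb : ∀ a, m < a → 0 ≤ ∑ i ∈ s with a ≤ f i, b i) :
    0 ≤ ∑ i ∈ s, b i * (f i - m) := by
  classical
  induction s using Finset.induction_on_min_value f generalizing m with
  | empty => simp
  | insert t s ht hmin ih =>
    have split_min : ∑ i ∈ insert t s, b i * (f i - m) =
        ∑ i ∈ s, b i * (f i - f t) + (∑ i ∈ insert t s, b i) * (f t - m) := by
      simp only [mul_sub, Finset.sum_sub_distrib, ← Finset.sum_mul, Finset.sum_insert ht]
      ring
    have tail : 0 ≤ ∑ i ∈ s, b i * (f i - f t) := by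
      refine ih (f t) hmin fun a ha => ?_
      have := hb a ((hm t (s.mem_insert_self t)).trans_lt ha)
      rwa [Finset.filter_insert, if_neg ha.not_ge] at this
    rw [split_min]
    refine add_nonneg tail ?_
    obtain hmt | hmt := (hm t (s.mem_insert_self t)).eq_or_lt
    · rw [hmt, sub_self, mul_zero]
    · refine mul_nonneg ?_ (sub_nonneg.2 hmt.le)
      have := hb (f t) hmt
      rwa [Finset.filter_true_of_mem (by simpa using hmin)] at this

lemma sum_mul_le_sum_mul_of_tail_le {ι κ R : Type*} [CommRing R] [LinearOrder R]
    [IsStrictOrderedRing R] [Fintype ι] [Fintype κ] (w f : ι → R) (v g : κ → R)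
    (htotal : ∑ i, w i = ∑ x, v x)
    (htail : ∀ a, ∑ i with a ≤ f i, w i ≤ ∑ x with a ≤ g x, v x) :
    ∑ i, w i * f i ≤ ∑ x, v x * g x := by
  classical
  obtain ⟨m, hm⟩ := ((Set.finite_range f).union (Set.finite_range g)).bddBelow
  have key := sum_mul_sub_nonneg Finset.univ (Sum.elim (-w) v) (Sum.elim f g) m
    (fun z _ => hm (by cases z <;> simp)) fun a _ => by
      rw [Finset.sum_filter, Fintype.sum_sum_type]
      change 0 ≤ (∑ i, if a ≤ f i then -w i else 0) + ∑ x, if a ≤ g x then v x else 0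
      rw [← Finset.sum_filter, ← Finset.sum_filter, Finset.sum_neg_distrib]
      linarith [htail a]
  simp only [Fintype.sum_sum_type, Sum.elim_inl, Sum.elim_inr, mul_sub, Finset.sum_sub_distrib,
    ← Finset.sum_mul, Pi.neg_apply, neg_mul, Finset.sum_neg_distrib, htotal] at key
  linarith

end Majorization

section Greedy

lemma exists_linearIndepOn_span_preimage_upperSet {T α K M : Type*} [Finite T] [LinearOrder α]
    [DivisionRing K] [AddCommGroup M] [Module K M] (f : T → α) (v : T → M) :
    ∃ B : Set T, LinearIndepOn K v B ∧ ∀ s, IsUpperSet s →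
      Submodule.span K (v '' (B ∩ f ⁻¹' s)) = Submodule.span K (v '' (f ⁻¹' s)) := by
  classical
  have := Fintype.ofFinite T
  suffices ∀ F : Finset T, ∃ B ⊆ (F : Set T), LinearIndepOn K v B ∧ ∀ s, IsUpperSet s →
      ∀ t ∈ F, f t ∈ s → v t ∈ Submodule.span K (v '' (B ∩ f ⁻¹' s)) by
    obtain ⟨B, -, hB, hspan⟩ := this Finset.univ
    refine ⟨B, hB, fun s hs => le_antisymm
      (Submodule.span_mono (Set.image_mono Set.inter_subset_right)) ?_⟩
    rw [Submodule.span_le]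
    rintro _ ⟨t, ht, rfl⟩
    exact hspan s hs t (Finset.mem_univ t) ht
  -- Greedy choice in order of decreasing `f`: `t` joins `B` unless `v t` is already spanned.
  intro F
  induction F using Finset.induction_on_min_value f with
  | empty => exact ⟨∅, by simp, by simp, by simp⟩
  | insert t F _ hmin ih =>
    obtain ⟨B, hBF, hB, hspan⟩ := ih
    rw [Finset.coe_insert]
    by_cases hvt : v t ∈ Submodule.span K (v '' B)
    · refine ⟨B, hBF.trans (Set.subset_insert t F), hB, fun s hs x hx hxs => ?_⟩
      obtain rfl | hx := Finset.mem_insert.1 hx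
      · have hBs : B ⊆ f ⁻¹' s := fun y hy => hs (hmin y (hBF hy)) hxs
        rwa [Set.inter_eq_left.2 hBs]
      · exact hspan s hs x hx hxs
    · refine ⟨insert t B, Set.insert_subset_insert hBF, hB.insert hvt, fun s hs x hx hxs => ?_⟩
      obtain rfl | hx := Finset.mem_insert.1 hx
      · exact Submodule.subset_span ⟨x, ⟨Set.mem_insert x B, hxs⟩, rfl⟩
      · refine Submodule.span_mono (Set.image_mono ?_) (hspan s hs x hx hxs)
        exact Set.inter_subset_inter_left _ (Set.subset_insert t B)

lemma finrank_image_eq_ncard {T K M : Type*} [Finite T] [DivisionRing K] [AddCommGroup M]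
    [Module K M] {v : T → M} {B : Set T} (hB : LinearIndepOn K v B) :
    Set.finrank K (v '' B) = B.ncard := by
  have := Fintype.ofFinite B
  rw [Set.finrank, Set.image_eq_range, finrank_span_eq_card hB, ← Nat.card_eq_fintype_card,
    Nat.card_coe_set_eq]

lemma exists_det_submatrix_ne_zero_of_le_finrank {T N E K α : Type*} [Finite T] [Fintype N]
    [DecidableEq N] [Fintype E] [Field K] [LinearOrder α] (W : Matrix T N K) (lab : T → E)
    {w : E → ℝ} (hw : ∑ e, w e = Fintype.card N)
    (hrank : ∀ S : Finset E, ∑ e ∈ S, w e ≤ Set.finrank K (W.row '' {t | lab t ∈ S}))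
    (f : E → α) :
    ∃ c : N → T, (W.submatrix c id).det ≠ 0 ∧
      ∀ a, ∑ e with a ≤ f e, w e ≤ Finset.card {x | a ≤ f (lab (c x))} := by
  classical
  obtain ⟨B, hB, hspan⟩ := exists_linearIndepOn_span_preimage_upperSet (K := K) (f ∘ lab) W.row
  have tail_le (s : Set α) [DecidablePred (· ∈ s)] (hs : IsUpperSet s) :
      ∑ e with f e ∈ s, w e ≤ (B ∩ f ∘ lab ⁻¹' s).ncard := by
    have preimage_eq : {t | lab t ∈ Finset.univ.filter (f · ∈ s)} = f ∘ lab ⁻¹' s := by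
      ext; simp
    rw [← finrank_image_eq_ncard (hB.mono Set.inter_subset_left), Set.finrank, hspan s hs,
      ← preimage_eq]
    exact hrank _
  have card_le : B.ncard ≤ Fintype.card N := by
    rw [← finrank_image_eq_ncard hB, ← Module.finrank_fintype_fun_eq_card K]
    exact Submodule.finrank_le _
  have le_card : Fintype.card N ≤ B.ncard := by
    have := tail_le Set.univ isUpperSet_univ
    simp only [Set.mem_univ, Finset.filter_true, Set.preimage_univ, Set.inter_univ, hw] at this
    exact_mod_cast this
  obtain ⟨e⟩ : Nonempty (N ≃ B) := Finite.card_eq.1 <| by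
    rw [Nat.card_eq_fintype_card, Nat.card_coe_set_eq, le_antisymm le_card card_le]
  refine ⟨fun x => e x, ?_, fun a => (tail_le (Set.Ici a) (isUpperSet_Ici a)).trans_eq ?_⟩
  · have rows_indep : LinearIndependent K (W.submatrix (fun x => (e x : T)) id).row :=
      LinearIndependent.comp hB e e.injective
    exact ((isUnit_iff_isUnit_det _).1 (linearIndependent_rows_iff_isUnit.1 rows_indep)).ne_zero
  · rw [← Subtype.image_preimage_coe, Set.ncard_image_of_injective _ Subtype.val_injective,
      ← Set.ncard_preimage_of_injective_subset_range e.injective (by simp),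
      ← Set.ncard_coe_finset]
    congr 2
    ext x
    simp

end Greedy

section UniformBound

lemma exists_det_submatrix_ne_zero_and_prod_rpow_le {T N E K : Type*} [Finite T] [Fintype N]
    [DecidableEq N] [Fintype E] [Field K] (W : Matrix T N K) (lab : T → E) {w : E → ℝ}
    (hw : ∑ e, w e = Fintype.card N)
    (hrank : ∀ S : Finset E, ∑ e ∈ S, w e ≤ Set.finrank K (W.row '' {t | lab t ∈ S}))
    {l : E → ℝ} (hl : ∀ e, 0 < l e) :
    ∃ c : N → T, (W.submatrix c id).det ≠ 0 ∧ ∏ e, l e ^ w e ≤ ∏ x, l (lab (c x)) := by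
  obtain ⟨c, hdet, htail⟩ :=
    exists_det_submatrix_ne_zero_of_le_finrank W lab hw hrank fun e => Real.log (l e)
  refine ⟨c, hdet, ?_⟩
  have log_le := sum_mul_le_sum_mul_of_tail_le w (fun e => Real.log (l e)) (fun _ : N => 1)
    (fun x => Real.log (l (lab (c x)))) (by simp [hw]) (by simpa using htail)
  simp only [one_mul] at log_le
  calc ∏ e, l e ^ w e = Real.exp (∑ e, w e * Real.log (l e)) := by
        simp only [Real.exp_sum, Real.rpow_def_of_pos (hl _), mul_comm]
    _ ≤ Real.exp (∑ x, Real.log (l (lab (c x)))) := Real.exp_le_exp.2 log_le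
    _ = ∏ x, l (lab (c x)) := by simp only [Real.exp_sum, Real.exp_log (hl _)]

lemma exists_pos_forall_exists_le_of_compact {X ι : Type*} [TopologicalSpace X] [CompactSpace X]
    {g : ι → X → ℝ} (hg : ∀ c, Continuous (g c)) (C : Finset ι) (hpos : ∀ u, ∃ c ∈ C, 0 < g c u) :
    ∃ δ > 0, ∀ u, ∃ c ∈ C, δ ≤ g c u := by
  cases isEmpty_or_nonempty X with
  | inl _ => exact ⟨1, one_pos, isEmptyElim⟩
  | inr hX =>
    have hC : C.Nonempty := hX.elim fun u => (hpos u).imp fun _ => And.left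
    have sup_continuous : Continuous fun u => C.sup' hC (g · u) :=
      Continuous.finset_sup'_apply hC fun c _ => hg c
    obtain ⟨u₀, -, hu₀⟩ :=
      isCompact_univ.exists_isMinOn Set.univ_nonempty sup_continuous.continuousOn
    refine ⟨C.sup' hC (g · u₀), (Finset.lt_sup'_iff hC).2 (hpos u₀), fun u => ?_⟩
    exact (Finset.le_sup'_iff hC).1 (hu₀ (Set.mem_univ u))

lemma exists_pos_mul_prod_rpow_le_det {X T N E : Type*} [TopologicalSpace X] [CompactSpace X]
    [Fintype T] [DecidableEq T] [Fintype N] [DecidableEq N] [Fintype E] {W : X → Matrix T N ℝ}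
    (hW : Continuous W) (lab : T → E) {w : E → ℝ} (hw : ∑ e, w e = Fintype.card N)
    (hrank : ∀ u, ∀ S : Finset E,
      ∑ e ∈ S, w e ≤ Set.finrank ℝ ((W u).row '' {t | lab t ∈ S})) :
    ∃ δ > 0, ∀ u, ∀ l : E → ℝ, (∀ e, 0 < l e) →
      δ * ∏ e, l e ^ w e ≤ ((W u)ᵀ * diagonal (fun t => l (lab t)) * W u).det := by
  classical
  have minor_continuous (c : N → T) : Continuous fun u => ((W u).submatrix c id).det ^ 2 :=
    (hW.matrix_submatrix c id).matrix_det.pow 2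
  have bound (C : Finset (N → T)) : ∃ δ > 0, (∀ u, ∃ c ∈ C, ((W u).submatrix c id).det ≠ 0) →
      ∀ u, ∃ c ∈ C, δ ≤ ((W u).submatrix c id).det ^ 2 := by
    by_cases hC : ∀ u, ∃ c ∈ C, ((W u).submatrix c id).det ≠ 0
    · obtain ⟨δ, hδ, h⟩ := exists_pos_forall_exists_le_of_compact minor_continuous C fun u =>
        (hC u).imp fun c hc => ⟨hc.1, by have := hc.2; positivity⟩
      exact ⟨δ, hδ, fun _ => h⟩
    · exact ⟨1, one_pos, fun h => absurd h hC⟩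
  choose δ δ_pos hδ using bound
  -- `l` enters only through the finite set `C` of selections whose monomial dominates, so the
  -- compactness constants to compare are finitely many.
  obtain ⟨C₀, hC₀⟩ := Finite.exists_min δ
  refine ⟨δ C₀, δ_pos C₀, fun u l hl => ?_⟩
  set C : Finset (N → T) := {c | ∏ e, l e ^ w e ≤ ∏ x, l (lab (c x))}
  obtain ⟨c, hc, hδc⟩ := hδ C (fun u => by
    simpa [C, and_comm] using
      exists_det_submatrix_ne_zero_and_prod_rpow_le (W u) lab hw (hrank u) hl) u
  calc δ C₀ * ∏ e, l e ^ w e ≤ ((W u).submatrix c id).det ^ 2 * ∏ x, l (lab (c x)) :=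
        mul_le_mul ((hC₀ C).trans hδc) (Finset.mem_filter.1 hc).2
          (Finset.prod_nonneg fun e _ => Real.rpow_nonneg (hl e).le _) (sq_nonneg _)
    _ ≤ _ := sq_det_submatrix_mul_prod_le_det (W u) (fun t => (hl (lab t)).le) c

instance compactSpace_unitaryGroup {𝕜 N : Type*} [RCLike 𝕜] [Fintype N] [DecidableEq N] :
    CompactSpace (unitaryGroup N 𝕜) := by
  have closed_unitary : IsClosed (unitaryGroup N 𝕜 : Set (Matrix N N 𝕜)) := isClosed_unitary
  have box_compact : IsCompact
      (Set.univ.pi fun _ => Set.univ.pi fun _ => Metric.closedBall 0 1 : Set (Matrix N N 𝕜)) :=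
    isCompact_univ_pi fun _ => isCompact_univ_pi fun _ => isCompact_closedBall 0 1
  refine isCompact_iff_compactSpace.1 (box_compact.of_isClosed_subset closed_unitary ?_)
  exact fun U hU i _ j _ => mem_closedBall_zero_iff.2 (entry_norm_bound_of_unitary hU i j)

end UniformBound

section RowKernel

variable {K T N : Type*} [Field K]

/-- The common kernel of the rows of `M` indexed by `P`. Semi-stability is tested on subspaces of
this form. -/
def rowKer [Fintype N] (M : Matrix T N K) (P : Set T) : Submodule K (N → K) where
  carrier := {z | ∀ t ∈ P, (M *ᵥ z) t = 0}
  add_mem' hx hy t ht := by rw [mulVec_add, Pi.add_apply, hx t ht, hy t ht, add_zero]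
  zero_mem' t _ := by rw [mulVec_zero, Pi.zero_apply]
  smul_mem' c x hx t ht := by rw [mulVec_smul, Pi.smul_apply, hx t ht, smul_zero]

lemma finrank_rowKer_add_finrank_image_row [Finite T] [Fintype N] (M : Matrix T N K) (P : Set T) :
    Module.finrank K (rowKer M P) + Set.finrank K (M.row '' P) = Fintype.card N := by
  have := Fintype.ofFinite P
  set B := M.submatrix ((↑) : P → T) id
  have range_row : Set.range B.row = M.row '' P := (Set.image_eq_range M.row P).symm
  have ker_eq : LinearMap.ker B.mulVecLin = rowKer M P := by
    ext z
    exact funext_iff.trans Subtype.forall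
  rw [add_comm, ← ker_eq, Set.finrank, ← range_row, ← rank_eq_finrank_span_row, rank,
    LinearMap.finrank_range_add_finrank_ker, Module.finrank_fintype_fun_eq_card]

lemma finrank_rowKer_add_ncard [Fintype N] [DecidableEq N] {M : Matrix N N K} (hM : IsUnit M)
    (P : Set N) :
    Module.finrank K (rowKer M P) + P.ncard = Fintype.card N := by
  rw [← finrank_rowKer_add_finrank_image_row M P,
    finrank_image_eq_ncard ((linearIndependent_rows_iff_isUnit.2 hM).linearIndepOn P)]

lemma finrank_rowKer_blockDiagonal'_le {o : Type*} [Fintype o] [DecidableEq o] {S β : o → Type*}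
    [∀ i, Fintype (β i)] (M : ∀ i, Matrix (S i) (β i) K) (P : Set (Σ i, S i)) :
    Module.finrank K (rowKer (blockDiagonal' M) P) ≤
      ∑ i, Module.finrank K (rowKer (M i) (Sigma.mk i ⁻¹' P)) := by
  have block_mulVec (x : (Σ i, β i) → K) (i : o) (s : S i) :
      (blockDiagonal' M *ᵥ x) ⟨i, s⟩ = (M i *ᵥ fun y => x ⟨i, y⟩) s := by
    simp [mulVec, dotProduct, Fintype.sum_sigma, blockDiagonal'_apply]
  let blocks : rowKer (blockDiagonal' M) P →ₗ[K] ∀ i, rowKer (M i) (Sigma.mk i ⁻¹' P) :=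
    { toFun x i := ⟨fun y => x.1 ⟨i, y⟩, fun s hs => (block_mulVec x i s).symm.trans (x.2 _ hs)⟩
      map_add' _ _ := rfl
      map_smul' _ _ := rfl }
  rw [← Module.finrank_pi_fintype]
  refine LinearMap.finrank_le_finrank_of_injective (f := blocks) fun x y hxy => ?_
  ext ⟨i, b⟩
  exact congrFun (congrArg Subtype.val (congrFun hxy i)) b

end RowKernel

section FrameMatrix

lemma sum_fst_eq_sum_mul_ncard {κ R : Type*} [Fintype κ] [CommSemiring R] {β : κ → Type*}
    (w : κ → R) (S : Finset (Σ j, β j)) :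
    ∑ e ∈ S, w e.1 = ∑ j, w j * (Sigma.mk j ⁻¹' (S : Set (Σ j, β j))).ncard := by
  classical
  rw [← Finset.sum_fiberwise S Sigma.fst]
  refine Finset.sum_congr rfl fun j _ => ?_
  have fiber_eq : Sigma.mk j '' (Sigma.mk j ⁻¹' (S : Set (Σ j, β j))) =
      (S.filter fun e => e.1 = j : Finset _) := by
    rw [Set.image_preimage_eq_inter_range, Set.range_sigmaMk, Finset.coe_filter]
    rfl
  rw [← Set.ncard_image_of_injective _ sigma_mk_injective, fiber_eq, Set.ncard_coe_finset,
    Finset.sum_congr rfl fun e he => congrArg w (Finset.mem_filter.1 he).2, Finset.sum_const,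
    nsmul_eq_mul, mul_comm]

variable {k m : ℕ} {d : Fin k → ℕ} {n : Fin m → ℕ} {A : Fin k → Fin m → ℕ} {p : Fin m → ℝ}
  (V : ∀ i : Fin k, ∀ j : Fin m, Fin (A i j) → Matrix (Fin (n j)) (Fin (d i)) ℝ)
  (u : ∀ j : Fin m, Matrix (Fin (n j)) (Fin (n j)) ℝ)

/-- The indices `(j, a, l)` of the frame rows at the source vertex `i`. -/
abbrev FrameRow (A : Fin k → Fin m → ℕ) (n : Fin m → ℕ) (i : Fin k) : Type :=
  Σ j : Fin m, Fin (A i j) × Fin (n j)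

/-- The frame vector `(j, l)` that the frame row `(j, a, l)` tests against. -/
def FrameRow.label {i : Fin k} (t : FrameRow A n i) : Σ j : Fin m, Fin (n j) :=
  ⟨t.1, t.2.2⟩

/-- The matrices `V i j a` read in the frames `u`: the row indexed by `(j, a, l)` is the `l`-th row
of `(u j)ᵀ * V i j a`. -/
def frameRows (i : Fin k) : Matrix (FrameRow A n i) (Fin (d i)) ℝ :=
  Matrix.of fun t => ((u t.1)ᵀ * V i t.1 t.2.1).row t.2.2

/-- The block diagonal matrix of the frame rows at all source vertices, whose row ranks encode the
semi-stability inequalities. -/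
def frameMatrix : Matrix (Σ i : Fin k, FrameRow A n i) (Σ i : Fin k, Fin (d i)) ℝ :=
  blockDiagonal' (frameRows V u)

lemma continuous_frameMatrix :
    Continuous (frameMatrix V) := by
  refine Continuous.matrix_blockDiagonal' (continuous_pi fun i => continuous_matrix fun t y => ?_)
  simp only [frameRows, of_apply, row_apply, mul_apply, transpose_apply]
  fun_prop

lemma transpose_frameRows_mul_diagonal_mul (l : (Σ j : Fin m, Fin (n j)) → ℝ) (i : Fin k) :
    (frameRows V u i)ᵀ * diagonal (fun t : FrameRow A n i => l t.label) * frameRows V u i =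
      ∑ j, ∑ a, (V i j a)ᵀ * (u j * diagonal (fun q => l ⟨j, q⟩) * (u j)ᵀ) * V i j a := by
  have regroup (j : Fin m) (a : Fin (A i j)) :
      (V i j a)ᵀ * (u j * diagonal (fun q => l ⟨j, q⟩) * (u j)ᵀ) * V i j a =
        ((u j)ᵀ * V i j a)ᵀ * diagonal (fun q => l ⟨j, q⟩) * ((u j)ᵀ * V i j a) := by
    simp only [transpose_mul, transpose_transpose, Matrix.mul_assoc]
  ext x y
  simp only [regroup, Matrix.sum_apply]
  simp only [mul_apply (M := _ * diagonal _), mul_diagonal, Fintype.sum_sigma,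
    Fintype.sum_prod_type, transpose_apply, frameRows, of_apply, row_apply, FrameRow.label]

lemma det_transpose_frameMatrix_mul_diagonal_mul (l : (Σ j : Fin m, Fin (n j)) → ℝ) :
    ((frameMatrix V u)ᵀ * diagonal (fun t : Σ i, FrameRow A n i => l t.2.label) *
        frameMatrix V u).det =
      ∏ i, (∑ j, ∑ a,
        (V i j a)ᵀ * (u j * diagonal (fun q => l ⟨j, q⟩) * (u j)ᵀ) * V i j a).det := by
  have weights : diagonal (fun t : Σ i, FrameRow A n i => l t.2.label) =
      blockDiagonal' fun i => diagonal fun t : FrameRow A n i => l t.label :=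
    (blockDiagonal'_diagonal fun i (t : FrameRow A n i) => l t.label).symm
  rw [frameMatrix, weights, blockDiagonal'_transpose, ← blockDiagonal'_mul, ← blockDiagonal'_mul,
    det_blockDiagonal']
  simp only [transpose_frameRows_mul_diagonal_mul]

lemma sum_weight_le_finrank_frameMatrix (hV : Semistable p V)
    (hbal : ∑ i : Fin k, (d i : ℝ) = ∑ j : Fin m, p j * (n j : ℝ)) (hu : ∀ j, IsUnit (u j))
    (S : Finset (Σ j : Fin m, Fin (n j))) :
    ∑ e ∈ S, p e.1 ≤ Set.finrank ℝ ((frameMatrix V u).row '' {t | t.2.label ∈ S}) := by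
  let P (j : Fin m) : Set (Fin (n j)) := {q | ⟨j, q⟩ ∈ S}
  let U1 (i : Fin k) := rowKer (frameRows V u i) {t | t.label ∈ S}
  let U2 (j : Fin m) := rowKer (u j)ᵀ (P j)
  have compatible (i j) (a : Fin (A i j)) : (U1 i).map (V i j a).mulVecLin ≤ U2 j := by
    rintro _ ⟨z, hz, rfl⟩ q hq
    rw [mulVecLin_apply, mulVec_mulVec]
    exact hz ⟨j, a, q⟩ hq
  have dim_U2 (j) : (Module.finrank ℝ (U2 j) : ℝ) = n j - (P j).ncard := by
    rw [eq_sub_iff_add_eq]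
    exact_mod_cast (finrank_rowKer_add_ncard ((isUnit_transpose _).2 (hu j)) _).trans
      (Fintype.card_fin _)
  have rank_nullity : (Module.finrank ℝ (rowKer (frameMatrix V u) {t | t.2.label ∈ S}) : ℝ) +
      Set.finrank ℝ ((frameMatrix V u).row '' {t | t.2.label ∈ S}) = ∑ i, (d i : ℝ) := by
    exact_mod_cast (finrank_rowKer_add_finrank_image_row _ _).trans (by simp)
  have ker_le : (Module.finrank ℝ (rowKer (frameMatrix V u) {t | t.2.label ∈ S}) : ℝ) ≤
      ∑ i, (Module.finrank ℝ (U1 i) : ℝ) := by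
    exact_mod_cast finrank_rowKer_blockDiagonal'_le (frameRows V u) {t | t.2.label ∈ S}
  have weight_eq : ∑ e ∈ S, p e.1 = ∑ j, p j * (P j).ncard := sum_fst_eq_sum_mul_ncard p S
  have dim_le := hV U1 U2 compatible
  simp only [dim_U2, mul_sub, Finset.sum_sub_distrib, ← weight_eq] at dim_le
  linarith

lemma exists_pos_mul_prod_det_rpow_le (hV : Semistable p V)
    (hbal : ∑ i : Fin k, (d i : ℝ) = ∑ j : Fin m, p j * (n j : ℝ)) :
    ∃ δ > 0, ∀ Z : ∀ j, Matrix (Fin (n j)) (Fin (n j)) ℝ, (∀ j, (Z j).PosDef) →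
      δ * ∏ j, (Z j).det ^ p j ≤ ∏ i, (∑ j, ∑ a, (V i j a)ᵀ * Z j * V i j a).det := by
  have frames_continuous : Continuous fun u : ∀ j, orthogonalGroup (Fin (n j)) ℝ =>
      frameMatrix V fun j => (u j : Matrix (Fin (n j)) (Fin (n j)) ℝ) :=
    (continuous_frameMatrix V).comp (by fun_prop)
  have total_weight :
      ∑ e : Σ j, Fin (n j), p e.1 = Fintype.card (Σ i : Fin k, Fin (d i)) := by
    simp [Fintype.sum_sigma, hbal, mul_comm]
  obtain ⟨δ, hδ, bound⟩ := exists_pos_mul_prod_rpow_le_det frames_continuous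
    (fun t => t.2.label) total_weight fun u =>
      sum_weight_le_finrank_frameMatrix V _ hV hbal fun j => (Unitary.toUnits (u j)).isUnit
  refine ⟨δ, hδ, fun Z hZ => ?_⟩
  set l : (Σ j, Fin (n j)) → ℝ := fun e => (hZ e.1).1.eigenvalues e.2
  have hl (e) : 0 < l e := (hZ e.1).eigenvalues_pos e.2
  have diagonalized (j) : ((hZ j).1.eigenvectorUnitary : Matrix (Fin (n j)) (Fin (n j)) ℝ) *
      diagonal (fun q => l ⟨j, q⟩) * (hZ j).1.eigenvectorUnitaryᵀ = Z j :=
    ((hZ j).1.spectral_theorem.trans (Unitary.conjStarAlgAut_apply ..)).symm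
  have prod_eigenvalues : ∏ e, l e ^ p e.1 = ∏ j, (Z j).det ^ p j := by
    rw [Fintype.prod_sigma]
    refine Finset.prod_congr rfl fun j _ => ?_
    rw [(hZ j).1.det_eq_prod_eigenvalues]
    exact Real.finsetProd_rpow _ _ (fun q _ => (hl ⟨j, q⟩).le) (p j)
  have := bound (fun j => (hZ j).1.eigenvectorUnitary) l hl
  rw [det_transpose_frameMatrix_mul_diagonal_mul, prod_eigenvalues] at this
  simpa only [diagonalized] using this

lemma cap_pos_of_semistable (hp : ∀ j, 0 < p j) (hV : Semistable p V)
    (hbal : ∑ i : Fin k, (d i : ℝ) = ∑ j : Fin m, p j * (n j : ℝ)) : 0 < cap p V := by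
  obtain ⟨δ, hδ, bound⟩ := exists_pos_mul_prod_det_rpow_le V hV hbal
  set κ := ∏ j, (p j ^ n j) ^ p j
  have hκ : 0 < κ :=
    Finset.prod_pos fun j _ => Real.rpow_pos_of_pos (pow_pos (hp j) _) _
  suffices δ * κ ≤ cap p V from (mul_pos hδ hκ).trans_le this
  refine le_csInf ⟨_, fun _ => 1, fun _ => PosDef.one, rfl⟩ ?_
  rintro _ ⟨Y, hY, rfl⟩
  have := bound (fun j => p j • Y j) fun j => (hY j).smul (hp j)
  rw [capVal, le_div_iff₀ (Finset.prod_pos fun j _ => Real.rpow_pos_of_pos (hY j).det_pos _)]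
  calc δ * κ * ∏ j, (Y j).det ^ p j = δ * ∏ j, (p j • Y j).det ^ p j := by
        simp only [κ, mul_assoc, ← Finset.prod_mul_distrib, det_smul, Fintype.card_fin,
          Real.mul_rpow (pow_nonneg (hp _).le _) (hY _).det_pos.le]
    _ ≤ _ := this
    _ = _ := by simp only [Matrix.mul_smul, Matrix.smul_mul, Finset.smul_sum]

end FrameMatrix

section AdaptedBasis

variable {K N : Type*} [Field K]

lemma exists_basis_span_image_eq [Finite N] {M : Type*} [AddCommGroup M] [Module K M]
    (b₀ : Module.Basis N K M) (U : Submodule K M) :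
    ∃ (b : Module.Basis N K M) (S : Finset N),
      Submodule.span K (b '' S) = U ∧ S.card = Module.finrank K U := by
  have := Module.Finite.of_basis b₀
  obtain ⟨U', hU'⟩ := U.exists_isCompl
  let b₁ := ((Module.finBasis K U).prod (Module.finBasis K U')).map (U.prodEquivOfIsCompl U' hU')
  let φ := b₁.indexEquiv b₀
  refine ⟨b₁.reindex φ, Finset.univ.map (Function.Embedding.inl.trans φ.toEmbedding), ?_, by simp⟩
  have adapted : b₁.reindex φ ∘ (φ ∘ Sum.inl) = U.subtype ∘ Module.finBasis K U := by
    ext i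
    simp [b₁]
  rw [Finset.coe_map, Finset.coe_univ, Set.image_univ, ← Set.range_comp]
  change Submodule.span K (Set.range (b₁.reindex φ ∘ (φ ∘ Sum.inl))) = U
  rw [adapted, Set.range_comp, Submodule.span_image, Module.Basis.span_eq, Submodule.map_top,
    Submodule.range_subtype]

variable [Fintype N] [DecidableEq N]

open Polynomial in
lemma X_pow_finrank_dvd_det_add_X_smul {A : Matrix N N K} {U : Submodule K (N → K)}
    (hU : U ≤ LinearMap.ker A.mulVecLin) (B : Matrix N N K) :
    X ^ Module.finrank K U ∣ (A.map C + (X : K[X]) • B.map C).det := by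
  obtain ⟨b, S, hspan, hcard⟩ := exists_basis_span_image_eq (Pi.basisFun K N) U
  let G := (Pi.basisFun K N).toMatrix b
  have G_unit : IsUnit (G.map C).det := by
    have := (Pi.basisFun K N).invertibleToMatrix b
    rw [← RingHom.mapMatrix_apply, ← RingHom.map_det]
    exact (isUnit_det_of_invertible G).map C
  have A_mul_G (x l : N) (hl : l ∈ S) : (A * G) x l = 0 :=
    congrFun (hU (hspan ▸ Submodule.subset_span ⟨l, hl, rfl⟩ : b l ∈ U)) x
  let R : Matrix N N K[X] := Matrix.of fun x l =>
    if l ∈ S then C ((B * G) x l) else C ((A * G) x l) + X * C ((B * G) x l)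
  have factored : (A.map C + (X : K[X]) • B.map C) * G.map C =
      Matrix.of fun x l => (if l ∈ S then X else 1) * R x l := by
    ext1 x l
    rw [Matrix.add_mul, Matrix.smul_mul, ← Matrix.map_mul, ← Matrix.map_mul]
    by_cases hl : l ∈ S <;> simp [R, hl, A_mul_G x l, -Matrix.map_mul]
  have := congrArg det factored
  rw [det_mul, det_mul_row, Finset.prod_ite_mem, Finset.univ_inter, Finset.prod_const, hcard]
    at this
  exact G_unit.dvd_mul_right.1 ⟨_, this⟩

open Polynomial in
lemma exists_det_add_smul_eq_pow_mul_eval {A : Matrix N N K} {U : Submodule K (N → K)}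
    (hU : U ≤ LinearMap.ker A.mulVecLin) (B : Matrix N N K) :
    ∃ q : K[X], ∀ ε, (A + ε • B).det = ε ^ Module.finrank K U * q.eval ε := by
  obtain ⟨q, hq⟩ := X_pow_finrank_dvd_det_add_X_smul hU B
  refine ⟨q, fun ε => ?_⟩
  have eval_eq : (A.map C + (X : K[X]) • B.map C).map (evalRingHom ε) = A + ε • B := by
    ext x y
    simp [mul_comm (B x y)]
  rw [← eval_eq, ← RingHom.mapMatrix_apply, ← RingHom.map_det, hq]
  simp

lemma exists_le_ker_and_posDef_add_smul (U : Submodule ℝ (N → ℝ)) :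
    ∃ Q P : Matrix N N ℝ, U ≤ LinearMap.ker Q.mulVecLin ∧ ∃ c > 0, ∀ ε > 0,
      (Q + ε • P).PosDef ∧ (Q + ε • P).det = c * ε ^ Module.finrank ℝ U := by
  obtain ⟨b, S, hspan, hcard⟩ := exists_basis_span_image_eq (Pi.basisFun ℝ N) U
  let H := b.toMatrix (Pi.basisFun ℝ N)
  have H_unit : IsUnit H := by
    have := b.invertibleToMatrix (Pi.basisFun ℝ N)
    exact isUnit_of_invertible H
  let D (v : N → ℝ) : Matrix N N ℝ := Hᵀ * diagonal v * H
  let v (ε : ℝ) (l : N) : ℝ := if l ∈ S then ε else 1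
  have path_eq (ε : ℝ) : D (v 0) + ε • D (v 1 - v 0) = D (v ε) := by
    rw [← Matrix.smul_mul, ← Matrix.mul_smul, ← Matrix.add_mul, ← Matrix.mul_add, ← diagonal_smul,
      diagonal_add]
    congr 3
    ext l
    by_cases hl : l ∈ S <;> simp [v, hl]
  refine ⟨D (v 0), D (v 1 - v 0), fun x hx => ?_, H.det ^ 2, ?_, fun ε hε => ?_⟩
  · have coords : H *ᵥ x = b.repr x := (Pi.basisFun ℝ N).toMatrix_mulVec_repr b x
    have support_le : ↑(b.repr x).support ⊆ (S : Set N) := b.mem_span_image.1 (hspan.symm ▸ hx)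
    have killed : diagonal (v 0) *ᵥ b.repr x = 0 := by
      ext l
      by_cases hl : l ∈ S
      · simp [v, hl, mulVec_diagonal]
      · simp [mulVec_diagonal, Finsupp.notMem_support_iff.1 fun h => hl (support_le h)]
    rw [LinearMap.mem_ker, mulVecLin_apply, ← mulVec_mulVec, ← mulVec_mulVec, coords, killed,
      mulVec_zero]
  · exact sq_pos_of_ne_zero ((isUnit_iff_isUnit_det H).1 H_unit).ne_zero
  · rw [path_eq]
    constructor
    · have diagonal_posDef : (diagonal (v ε)).PosDef :=
        PosDef.diagonal fun l => by dsimp only [v]; split_ifs <;> positivity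
      simpa only [conjTranspose_eq_transpose_of_trivial] using
        diagonal_posDef.conjTranspose_mul_mul_same (mulVec_injective_iff_isUnit.2 H_unit)
    · rw [det_mul, det_mul, det_transpose, det_diagonal, Finset.prod_ite_mem, Finset.univ_inter,
        Finset.prod_const, hcard]
      ring

end AdaptedBasis

section Destabilizing

variable {k m : ℕ} {d : Fin k → ℕ} {n : Fin m → ℕ} {A : Fin k → Fin m → ℕ} {p : Fin m → ℝ}
  {V : ∀ i : Fin k, ∀ j : Fin m, Fin (A i j) → Matrix (Fin (n j)) (Fin (d i)) ℝ}

lemma cap_le_capVal (h : 0 < cap p V) {Y : ∀ j, Matrix (Fin (n j)) (Fin (n j)) ℝ}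
    (hY : ∀ j, (Y j).PosDef) : cap p V ≤ capVal p V Y := by
  refine csInf_le ?_ ⟨Y, hY, rfl⟩
  by_contra hbdd
  exact h.ne' (Real.sInf_of_not_bddBelow hbdd)

open Polynomial in
lemma exists_capVal_eq_rpow_mul_eval {U1 : ∀ i, Submodule ℝ (Fin (d i) → ℝ)}
    {U2 : ∀ j, Submodule ℝ (Fin (n j) → ℝ)}
    (hU : ∀ i j a, (U1 i).map (V i j a).mulVecLin ≤ U2 j) (p : Fin m → ℝ) :
    ∃ (Y : ℝ → ∀ j, Matrix (Fin (n j)) (Fin (n j)) ℝ) (q : ℝ[X]), ∀ ε > 0,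
      (∀ j, (Y ε j).PosDef) ∧ capVal p V (Y ε) =
        ε ^ (∑ i, (Module.finrank ℝ (U1 i) : ℝ) - ∑ j, p j * Module.finrank ℝ (U2 j)) *
          q.eval ε := by
  choose Q P hQ c hc hpath using fun j => exists_le_ker_and_posDef_add_smul (U2 j)
  let form (Z : ∀ j, Matrix (Fin (n j)) (Fin (n j)) ℝ) (i : Fin k) :=
    ∑ j, p j • ∑ a, (V i j a)ᵀ * Z j * V i j a
  have form_add (ε : ℝ) (i) : form (fun j => Q j + ε • P j) i = form Q i + ε • form P i := by
    simp only [form, Matrix.mul_add, Matrix.add_mul, Matrix.mul_smul, Matrix.smul_mul,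
      Finset.sum_add_distrib, smul_add, Finset.smul_sum, smul_comm ε]
  have le_ker (i) : U1 i ≤ LinearMap.ker (form Q i).mulVecLin := fun x hx => by
    have hVx (j a) : Q j *ᵥ V i j a *ᵥ x = 0 := hQ j (hU i j a ⟨x, hx, rfl⟩)
    simp [form, hVx]
  choose q hq using fun i => exists_det_add_smul_eq_pow_mul_eval (le_ker i) (form P i)
  refine ⟨fun ε j => Q j + ε • P j, C (∏ j, c j ^ p j)⁻¹ * ∏ i, q i, fun ε hε =>
    ⟨fun j => (hpath j ε hε).1, ?_⟩⟩
  have numerator : ∏ i, (form (fun j => Q j + ε • P j) i).det =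
      ε ^ (∑ i, (Module.finrank ℝ (U1 i) : ℝ)) * ∏ i, (q i).eval ε := by
    simp only [form_add, hq, Finset.prod_mul_distrib, Real.rpow_sum_of_pos hε, Real.rpow_natCast]
  have denominator : ∏ j, (Q j + ε • P j).det ^ p j =
      ε ^ (∑ j, p j * Module.finrank ℝ (U2 j)) * ∏ j, c j ^ p j := by
    rw [Real.rpow_sum_of_pos hε, ← Finset.prod_mul_distrib]
    refine Finset.prod_congr rfl fun j _ => ?_
    rw [(hpath j ε hε).2, Real.mul_rpow (hc j).le (pow_nonneg hε.le _), ← Real.rpow_natCast,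
      ← Real.rpow_mul hε.le, mul_comm, mul_comm (p j)]
  calc capVal p V (fun j => Q j + ε • P j) =
        (∏ i, (form (fun j => Q j + ε • P j) i).det) / ∏ j, (Q j + ε • P j).det ^ p j := rfl
    _ = _ := by
      rw [numerator, denominator, Real.rpow_sub hε, eval_mul, eval_C, eval_prod,
        mul_div_mul_comm, inv_mul_eq_div]

lemma semistable_of_cap_pos (h : 0 < cap p V) : Semistable p V := by
  intro U1 U2 hU
  by_contra! destabilizing
  obtain ⟨Y, q, hY⟩ := exists_capVal_eq_rpow_mul_eval hU p
  set α := ∑ i, (Module.finrank ℝ (U1 i) : ℝ) - ∑ j, p j * Module.finrank ℝ (U2 j)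
  have hα : 0 < α := sub_pos.2 destabilizing
  have cap_le (ε : ℝ) (hε : 0 < ε) : cap p V ≤ ε ^ α * q.eval ε :=
    (cap_le_capVal h (hY ε hε).1).trans_eq (hY ε hε).2
  have limit : Filter.Tendsto (fun ε => ε ^ α * q.eval ε) (nhdsWithin 0 (Set.Ioi 0)) (nhds 0) := by
    have limit_at_zero :=
      ((Real.continuous_rpow_const hα.le).tendsto 0).mul (q.continuous.tendsto 0)
    rw [Real.zero_rpow hα.ne', zero_mul] at limit_at_zero
    exact limit_at_zero.mono_left nhdsWithin_le_nhds
  exact h.not_ge (ge_of_tendsto limit (Filter.eventually_of_mem self_mem_nhdsWithin cap_le))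

end Destabilizing

theorem feasible_iff_semistable_general {k m : ℕ} {d : Fin k → ℕ} {n : Fin m → ℕ}
    {A : Fin k → Fin m → ℕ} {p : Fin m → ℝ} (hp : ∀ j, 0 < p j)
    (hbal : ∑ i : Fin k, (d i : ℝ) = ∑ j : Fin m, p j * (n j : ℝ))
    (V : ∀ i : Fin k, ∀ j : Fin m, Fin (A i j) → Matrix (Fin (n j)) (Fin (d i)) ℝ) :
    0 < cap p V ↔ Semistable p V :=
  ⟨semistable_of_cap_pos, fun hV => cap_pos_of_semistable V hp hV hbal⟩

/-- For positive rational weights, a quiver datum `(V, p)` is feasible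
(`cap(V, p) > 0`) if and only if `V` is `p`-semi-stable. -/
theorem feasible_iff_semistable {k m : ℕ} (hk : 0 < k) (hm : 0 < m)
    {d : Fin k → ℕ} {n : Fin m → ℕ} {A : Fin k → Fin m → ℕ} (p : Fin m → ℚ)
    (hd : ∀ i, 0 < d i) (hn : ∀ j, 0 < n j) (hp : ∀ j, 0 < p j)
    (hbal : ∑ i : Fin k, (d i : ℝ) = ∑ j : Fin m, (p j : ℝ) * (n j : ℝ))
    (V : ∀ i : Fin k, ∀ j : Fin m, Fin (A i j) → Matrix (Fin (n j)) (Fin (d i)) ℝ) :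
    0 < cap (fun j => (p j : ℝ)) V ↔ Semistable (fun j => (p j : ℝ)) V :=
  feasible_iff_semistable_general (fun j => by exact_mod_cast hp j) hbal V
end
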